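/- For each 0 < σ ≤ 1, the function h_σ(x) = (1/π)·sin(πσ/(1+x))·x^{σ/(1+x)−1} on (0,∞) is a probability density, and for every λ > 0 with λ ≠ 1, ∫₀^∞ h_σ(x)·(1+λx)^{-1} dx = λ^{−σλ/(λ−1)}. (Proposition 4.2(iv): h_σ is the density of β_{σ,1−σ}·M_σ(F_W), the beta-scaled Dirichlet mean for W a ratio of independent exponentials, characterized by its order-1 Cauchy–Stieltjes transform e^{−σψ_{F_W}(λ)}.) -/

import Mathlib

open MeasureTheory Filter Topology
open Complex (I)

namespace BSR

def strip : Set ℂ := {w | |w.im| < 2 * Real.pi}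

lemma strip_open : IsOpen strip :=
  isOpen_lt (by fun_prop) continuous_const

def FP : Filter ℂ := comap Complex.re atTop ⊓ 𝓟 {w | |w.im| ≤ Real.pi}
def FM : Filter ℂ := comap Complex.re atBot ⊓ 𝓟 {w | |w.im| ≤ Real.pi}

lemma mem_rect {R y : ℝ} (hy : y ∈ Set.uIoc (-Real.pi) Real.pi) :
    |((R : ℂ) + y * I).im| ≤ Real.pi := by
  have := Real.pi_pos
  rw [Set.uIoc_of_le (by linarith)] at hy
  simp only [Complex.add_im, Complex.ofReal_im, Complex.mul_im, Complex.ofReal_re, Complex.I_im,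
    Complex.I_re]
  rw [abs_le]; constructor <;> linarith [hy.1, hy.2]

lemma side_aux (K : ℂ → ℂ) (hK : DifferentiableOn ℂ K strip) (A : ℂ) (l : Filter ℝ)
    (h : ∀ ε > 0, ∀ᶠ R : ℝ in l, ∀ y ∈ Set.uIoc (-Real.pi) Real.pi, ‖K (R + y * I) - A‖ ≤ ε) :
    Tendsto (fun R : ℝ => ∫ y in (-Real.pi)..Real.pi, K (R + y * I)) l
      (𝓝 (2 * Real.pi * A)) := by
  have hpi := Real.pi_pos
  have hint : ∀ R : ℝ, IntervalIntegrable (fun y : ℝ => K (R + y * I)) volume (-Real.pi) Real.pi := by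
    intro R
    apply ContinuousOn.intervalIntegrable
    apply hK.continuousOn.comp (by fun_prop)
    intro y hy
    rw [Set.uIcc_of_le (by linarith)] at hy
    simp only [strip, Set.mem_ofPred_eq, Complex.add_im, Complex.ofReal_im, Complex.mul_im,
      Complex.ofReal_re, Complex.I_im, Complex.I_re]
    rw [abs_lt]; constructor <;> linarith [hy.1, hy.2]
  rw [Metric.tendsto_nhds]
  intro ε hε
  filter_upwards [h (ε / (4 * Real.pi)) (by positivity)] with R hR
  have e : (2 * Real.pi * A : ℂ) = ∫ y in (-Real.pi)..Real.pi, A := by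
    rw [intervalIntegral.integral_const, Complex.real_smul]; push_cast; ring
  rw [dist_eq_norm, e, ← intervalIntegral.integral_sub (hint R) (by simp)]
  have := intervalIntegral.norm_integral_le_of_norm_le_const hR
  refine this.trans_lt ?_
  rw [abs_of_pos (by linarith)]
  have : ε / (4 * Real.pi) * (Real.pi - -Real.pi) = ε / 2 := by field_simp; norm_num
  linarith

lemma side_P (K : ℂ → ℂ) (hK : DifferentiableOn ℂ K strip) (A : ℂ) (h : Tendsto K FP (𝓝 A)) :
    Tendsto (fun R : ℝ => ∫ y in (-Real.pi)..Real.pi, K (R + y * I)) atTop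
      (𝓝 (2 * Real.pi * A)) := by
  apply side_aux K hK
  intro ε hε
  have := (Metric.tendsto_nhds.1 h) ε hε
  rw [FP, eventually_inf_principal, eventually_comap] at this
  filter_upwards [this] with R hR y hy
  have := hR (R + y * I) (by simp) (mem_rect hy)
  rw [dist_eq_norm] at this
  exact this.le

lemma side_M (K : ℂ → ℂ) (hK : DifferentiableOn ℂ K strip) (A : ℂ) (h : Tendsto K FM (𝓝 A)) :
    Tendsto (fun R : ℝ => ∫ y in (-Real.pi)..Real.pi, K (R + y * I)) atBot
      (𝓝 (2 * Real.pi * A)) := by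
  apply side_aux K hK
  intro ε hε
  have := (Metric.tendsto_nhds.1 h) ε hε
  rw [FM, eventually_inf_principal, eventually_comap] at this
  filter_upwards [this] with R hR y hy
  have := hR (R + y * I) (by simp) (mem_rect hy)
  rw [dist_eq_norm] at this
  exact this.le

lemma main_lim (K : ℂ → ℂ) (hK : DifferentiableOn ℂ K strip) (A B : ℂ)
    (hA : Tendsto K FP (𝓝 A)) (hB : Tendsto K FM (𝓝 B)) :
    Tendsto (fun R : ℝ => ∫ x in (-R)..R, (K (x + Real.pi * I) - K (x - Real.pi * I))) atTop
      (𝓝 (2 * Real.pi * I * (A - B))) := by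
  have hpi := Real.pi_pos
  have h1 := side_P K hK A hA
  have h2 := (side_M K hK B hB).comp tendsto_neg_atTop_atBot
  have h3 := (h1.sub h2).const_mul I
  convert h3 using 2 with R
  · have hs : ∀ y : ℝ, |y| ≤ Real.pi → Set.MapsTo (fun x : ℝ => (x : ℂ) + y * I) Set.univ strip := by
      intro y hy x _
      simp [strip]; linarith
    have hc : ∀ y : ℝ, |y| ≤ Real.pi → Continuous (fun x : ℝ => K ((x : ℂ) + y * I)) := by
      intro y hy
      rw [← continuousOn_univ]
      exact hK.continuousOn.comp (by fun_prop) (hs y hy)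
    have c1 := hc Real.pi (by rw [abs_of_pos hpi])
    have c2 := hc (-Real.pi) (by rw [abs_neg, abs_of_pos hpi])
    have rect := Complex.integral_boundary_rect_eq_zero_of_differentiableOn K
      ((-R : ℝ) + (-Real.pi : ℝ) * I) ((R : ℝ) + (Real.pi : ℝ) * I) (by
        apply hK.mono
        intro w hw
        have := hw.2
        simp at this
        rw [Set.uIcc_of_le (by linarith)] at this
        simp only [strip, Set.mem_ofPred_eq]
        rw [abs_lt]; constructor <;> linarith [this.1, this.2])
    simp only [Complex.add_re, Complex.add_im, Complex.ofReal_re, Complex.ofReal_im, Complex.mul_re,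
      Complex.mul_im, Complex.I_re, Complex.I_im, mul_zero, mul_one, sub_zero, add_zero, zero_add, smul_eq_mul, zero_mul, sub_self] at rect
    have e : ∀ x : ℝ, (x : ℂ) - Real.pi * I = x + (-Real.pi : ℝ) * I := by intro x; push_cast; ring
    simp only [e]
    rw [intervalIntegral.integral_sub (c1.intervalIntegrable _ _) (c2.intervalIntegrable _ _)]
    simp only [Function.comp]
    linear_combination -rect
  · ring

lemma real_lim (K : ℂ → ℂ) (hK : DifferentiableOn ℂ K strip) (A B : ℂ)
    (hA : Tendsto K FP (𝓝 A)) (hB : Tendsto K FM (𝓝 B)) (g : ℝ → ℝ) (hg : Continuous g)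
    (hg0 : ∀ t, 0 ≤ g t) (c : ℝ) (hc : A - B = c)
    (hKg : ∀ t : ℝ, K (t + Real.pi * I) - K (t - Real.pi * I) = 2 * Real.pi * I * g t) :
    ∫ t, g t = c := by
  have h := main_lim K hK A B hA hB
  simp only [hKg, hc] at h
  have hne : (2 * Real.pi * I : ℂ) ≠ 0 := by simp [Real.pi_ne_zero]
  have h' : Tendsto (fun R : ℝ => ∫ x in (-R)..R, g x) atTop (𝓝 c) := by
    have := h.const_mul (2 * Real.pi * I : ℂ)⁻¹
    simp only [intervalIntegral.integral_const_mul, inv_mul_cancel_left₀ hne,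
      intervalIntegral.integral_ofReal] at this
    have := (Complex.continuous_re.tendsto _).comp this
    simpa [Function.comp_def] using this
  have hi : Integrable g := by
    refine integrable_of_intervalIntegral_norm_tendsto (l := atTop) (a := fun R : ℝ => -R) (b := fun R : ℝ => R) c ?_ ?_ ?_ ?_
    · intro i
      exact (hg.integrableOn_Icc).mono_set Set.Ioc_subset_Icc_self
    · exact tendsto_neg_atTop_atBot
    · exact tendsto_id
    · simpa only [Real.norm_of_nonneg (hg0 _)] using h'
  exact tendsto_nhds_unique
    (intervalIntegral_tendsto_integral hi tendsto_neg_atTop_atBot tendsto_id) h'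

lemma subst (f : ℝ → ℝ) : ∫ x in Set.Ioi (0:ℝ), f x = ∫ t : ℝ, Real.exp t * f (Real.exp t) := by
  have := integral_image_eq_integral_abs_deriv_smul (s := Set.univ) (f := Real.exp) (f' := Real.exp)
    MeasurableSet.univ (fun x _ => (Real.hasDerivAt_exp x).hasDerivWithinAt)
    Real.exp_injective.injOn f
  simpa [Set.image_univ, Real.range_exp, abs_of_pos (Real.exp_pos _)] using this


lemma exp_FM : Tendsto Complex.exp FM (𝓝 0) :=
  Complex.tendsto_exp_comap_re_atBot.mono_left inf_le_left

lemma re_FM : Tendsto Complex.re FM atBot := tendsto_comap.mono_left inf_le_left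

lemma mul_exp_FM : Tendsto (fun w => w * Complex.exp w) FM (𝓝 0) := by
  rw [tendsto_zero_iff_norm_tendsto_zero]
  have h1 : Tendsto (fun t : ℝ => (|t| + Real.pi) * Real.exp t) atBot (𝓝 0) := by
    have h := (Real.tendsto_pow_mul_exp_neg_atTop_nhds_zero 1).comp tendsto_neg_atBot_atTop
    have h2 := Real.tendsto_exp_atBot.const_mul Real.pi
    have h3 := h.add h2
    simp only [mul_zero, add_zero] at h3
    refine h3.congr' ?_
    filter_upwards [eventually_le_atBot 0] with t ht
    simp [abs_of_nonpos ht]; ring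
  refine squeeze_zero' (Eventually.of_forall fun _ => norm_nonneg _) ?_ (h1.comp re_FM)
  have : {w : ℂ | |w.im| ≤ Real.pi} ∈ FM := mem_inf_of_right (mem_principal_self _)
  filter_upwards [this] with w hw
  rw [norm_mul, Complex.norm_exp]
  have := Complex.norm_le_abs_re_add_abs_im w
  simp only [Function.comp]
  have hw' : |w.im| ≤ Real.pi := hw
  gcongr
  linarith

lemma neg_FP : Tendsto (fun w : ℂ => -w) FP FM := by
  refine tendsto_inf.2 ⟨tendsto_comap_iff.2 ?_, ?_⟩
  · have : Tendsto (fun w : ℂ => -w.re) FP atBot :=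
      tendsto_neg_atTop_atBot.comp (tendsto_comap.mono_left inf_le_left)
    simpa [Function.comp_def] using this
  · refine tendsto_principal.2 ?_
    have : {w : ℂ | |w.im| ≤ Real.pi} ∈ FP := mem_inf_of_right (mem_principal_self _)
    filter_upwards [this] with w hw
    simpa using hw

lemma ne_FM (a : ℝ) : ∀ᶠ w : ℂ in FM, w ≠ a := by
  filter_upwards [re_FM.eventually (eventually_lt_atBot a)] with w hw h
  simp [h] at hw

lemma ne_FP (a : ℝ) : ∀ᶠ w : ℂ in FP, w ≠ a := by
  filter_upwards [neg_FP.eventually (ne_FM (-a))] with w hw h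
  simp [h] at hw

lemma quot_FP : Tendsto (fun w => w / (1 - Complex.exp w)) FP (𝓝 0) := by
  have h1 := mul_exp_FM.comp neg_FP
  have h2 := (exp_FM.comp neg_FP).const_sub 1
  have h3 := h1.div h2 (by simp)
  simp only [sub_zero, div_one] at h3
  refine h3.congr fun w => ?_
  simp only [Function.comp, Pi.div_apply, Complex.exp_neg]
  have := Complex.exp_ne_zero w
  by_cases h : Complex.exp w = 1
  · simp [h]
  · have h1 : 1 - Complex.exp w ≠ 0 := sub_ne_zero.2 (Ne.symm h)
    have h2 : Complex.exp w - 1 ≠ 0 := sub_ne_zero.2 h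
    have h3 : 1 - (Complex.exp w)⁻¹ ≠ 0 := by
      rw [sub_ne_zero]; intro h'; exact h (by rw [← inv_inv (Complex.exp w), ← h', inv_one])
    rw [div_eq_div_iff h3 h1]
    field_simp
    ring

lemma quot_FM : Tendsto (fun w => (w / (1 - Complex.exp w)).re) FM atBot := by
  have h3 := mul_exp_FM.div (exp_FM.const_sub 1) (by simp)
  simp only [sub_zero, div_one] at h3
  have h4 := (Complex.continuous_re.tendsto _).comp h3
  have h5 := re_FM.atBot_add h4
  refine h5.congr' ?_
  filter_upwards [(exp_FM.const_sub 1).eventually_ne (by simp : (1 - 0 : ℂ) ≠ 0)] with w hw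
  simp only [Function.comp, Pi.div_apply]
  rw [← Complex.add_re]
  congr 1
  field_simp
  ring

/-- `Φ(w) = exp (σ w / (1 - e^w))`, with the removable singularity at `0` filled in. -/
noncomputable def Phi (σ : ℝ) (w : ℂ) : ℂ := Complex.exp (-σ / dslope Complex.exp 0 w)

lemma Phi_of_ne (σ : ℝ) {w : ℂ} (hw : w ≠ 0) :
    Phi σ w = Complex.exp (σ * (w / (1 - Complex.exp w))) := by
  rw [Phi, dslope_of_ne _ hw, slope_def_field]
  congr 1
  have : (Complex.exp w - 1) / w = -((1 - Complex.exp w) / w) := by ring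
  rw [Complex.exp_zero, sub_zero, this, neg_div_neg_eq, div_div_eq_mul_div, mul_div_assoc]

lemma dslope_exp_ne (a : ℝ) {w : ℂ} (hw : w ∈ strip) : dslope Complex.exp a w ≠ 0 := by
  by_cases h : w = a
  · rw [h, dslope_same, Complex.deriv_exp]; exact Complex.exp_ne_zero _
  · rw [dslope_of_ne _ h, slope_def_field]
    refine div_ne_zero ?_ (sub_ne_zero.2 h)
    rw [sub_ne_zero]
    intro h'
    obtain ⟨n, hn⟩ := Complex.exp_eq_exp_iff_exists_int.1 h'
    have him : w.im = n * (2 * Real.pi) := by rw [hn]; simp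
    have hw' : |w.im| < 2 * Real.pi := hw
    have hpi := Real.two_pi_pos
    rw [him, abs_mul, abs_of_pos hpi] at hw'
    have h1 : |(n : ℝ)| < 1 := by
      by_contra hc
      push Not at hc
      nlinarith
    have h2 : n = 0 := by
      rw [← Int.abs_lt_one_iff]; exact_mod_cast h1
    apply h; rw [hn, h2]; simp

lemma mem_strip (a : ℝ) : (a : ℂ) ∈ strip := by
  have := Real.pi_pos
  simpa [strip] using this

lemma dslope_diff (f : ℂ → ℂ) (hf : DifferentiableOn ℂ f strip) (a : ℝ) :
    DifferentiableOn ℂ (dslope f a) strip :=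
  (Complex.differentiableOn_dslope (strip_open.mem_nhds (mem_strip a))).2 hf

lemma Phi_diff (σ : ℝ) : DifferentiableOn ℂ (Phi σ) strip := by
  have h := dslope_diff Complex.exp Complex.differentiable_exp.differentiableOn 0
  have h0 := fun w (hw : w ∈ strip) => dslope_exp_ne 0 hw
  simp only [Complex.ofReal_zero] at h h0
  exact (DifferentiableOn.div (differentiableOn_const _) h h0).cexp

lemma Phi_FP (σ : ℝ) : Tendsto (Phi σ) FP (𝓝 1) := by
  have := (Complex.continuous_exp.tendsto _).comp (quot_FP.const_mul (σ : ℂ))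
  simp only [mul_zero, Complex.exp_zero] at this
  refine this.congr' ?_
  filter_upwards [ne_FP 0] with w hw
  rw [Phi_of_ne σ (by simpa using hw)]; rfl

lemma Phi_FM (σ : ℝ) (hσ : 0 < σ) : Tendsto (Phi σ) FM (𝓝 0) := by
  rw [tendsto_zero_iff_norm_tendsto_zero]
  refine (Real.tendsto_exp_atBot.comp (quot_FM.const_mul_atBot hσ)).congr' ?_
  filter_upwards [ne_FM 0] with w hw
  rw [Phi_of_ne σ (by simpa using hw), Complex.norm_exp, Complex.re_ofReal_mul]; rfl

lemma Phi_line (σ t : ℝ) (ε : ℝ) (hε : ε = 1 ∨ ε = -1) :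
    Phi σ (t + (ε * Real.pi : ℝ) * I) = (Real.exp (σ * t / (1 + Real.exp t)) : ℂ) *
      (Real.cos (Real.pi * σ / (1 + Real.exp t)) +
        ε * Real.sin (Real.pi * σ / (1 + Real.exp t)) * I) := by
  have hne : (t + (ε * Real.pi : ℝ) * I : ℂ) ≠ 0 := by
    intro h
    have := congrArg Complex.im h
    rcases hε with rfl | rfl <;> simp [Real.pi_ne_zero] at this
  have hexp : Complex.exp (t + (ε * Real.pi : ℝ) * I) = -Complex.exp t := by
    rw [Complex.exp_add]
    rcases hε with rfl | rfl
    · simp [Complex.exp_pi_mul_I]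
    · have : ((-1 * Real.pi : ℝ) * I : ℂ) = -(Real.pi * I) := by push_cast; ring
      rw [this, Complex.exp_neg, Complex.exp_pi_mul_I]; norm_num
  have h1 : (1 + Complex.exp t : ℂ) ≠ 0 := by
    rw [← Complex.ofReal_exp]; exact_mod_cast (by positivity : 1 + Real.exp t ≠ 0)
  rw [Phi_of_ne σ hne, hexp, sub_neg_eq_add]
  have : (σ * ((t + (ε * Real.pi : ℝ) * I) / (1 + Complex.exp t)) : ℂ) =
      ((σ * t / (1 + Real.exp t) : ℝ) : ℂ) + ((ε * (Real.pi * σ / (1 + Real.exp t)) : ℝ) : ℂ) * I := by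
    push_cast; field_simp
  rw [this, Complex.exp_add, Complex.exp_mul_I, ← Complex.ofReal_exp, ← Complex.ofReal_cos,
    ← Complex.ofReal_sin]
  rcases hε with rfl | rfl
  · simp
  · simp [Real.cos_neg, Real.sin_neg]

lemma Phi_jump (σ t : ℝ) :
    Phi σ (t + Real.pi * I) - Phi σ (t - Real.pi * I) =
      2 * I * (Real.exp (σ * t / (1 + Real.exp t)) * Real.sin (Real.pi * σ / (1 + Real.exp t)) : ℝ) := by
  have h1 := Phi_line σ t 1 (Or.inl rfl)
  have h2 := Phi_line σ t (-1) (Or.inr rfl)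
  have e1 : (t + (1 * Real.pi : ℝ) * I : ℂ) = t + Real.pi * I := by push_cast; ring
  have e2 : (t + (-1 * Real.pi : ℝ) * I : ℂ) = t - Real.pi * I := by push_cast; ring
  rw [e1] at h1
  rw [e2] at h2
  rw [h1, h2]
  push_cast
  ring

/-- the density pulled back by `x = e^t`, over `1 + l x`. -/
noncomputable def g (σ l t : ℝ) : ℝ :=
  1 / Real.pi * (Real.exp (σ * t / (1 + Real.exp t)) * Real.sin (Real.pi * σ / (1 + Real.exp t)))
    * (1 + l * Real.exp t)⁻¹

lemma sin_nn (σ : ℝ) (h0 : 0 < σ) (h1 : σ ≤ 1) (x : ℝ) (hx : 0 < x) :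
    0 ≤ Real.sin (Real.pi * σ / (1 + x)) := by
  have hpi := Real.pi_pos
  apply Real.sin_nonneg_of_nonneg_of_le_pi (by positivity)
  rw [div_le_iff₀ (by positivity)]
  nlinarith [mul_pos hpi hx]

lemma g_nn (σ l : ℝ) (h0 : 0 < σ) (h1 : σ ≤ 1) (hl : 0 ≤ l) (t : ℝ) : 0 ≤ g σ l t := by
  have := sin_nn σ h0 h1 (Real.exp t) (Real.exp_pos t)
  have := Real.pi_pos
  unfold g
  positivity

lemma g_cont (σ l : ℝ) (hl : 0 ≤ l) : Continuous (g σ l) := by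
  have h1 : ∀ t, 1 + l * Real.exp t ≠ 0 := fun t => by positivity
  have h2 : ∀ t, 1 + Real.exp t ≠ 0 := fun t => by positivity
  unfold g
  fun_prop (disch := assumption)

lemma mass_g (σ : ℝ) (h0 : 0 < σ) (h1 : σ ≤ 1) : ∫ t, g σ 0 t = 1 := by
  refine real_lim (Phi σ) (Phi_diff σ) 1 0 (Phi_FP σ) (Phi_FM σ h0) _ (g_cont σ 0 le_rfl)
    (g_nn σ 0 h0 h1 le_rfl) 1 (by simp) fun t => ?_
  have : (Real.pi : ℂ) ≠ 0 := by exact_mod_cast Real.pi_ne_zero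
  rw [Phi_jump, g]
  push_cast
  field_simp
  simp

lemma transform_g (σ l : ℝ) (h0 : 0 < σ) (h1 : σ ≤ 1) (hl : 0 < l) (hl1 : l ≠ 1) :
    ∫ t, g σ l t = l ^ (-(σ * l / (l - 1))) := by
  set a : ℝ := -Real.log l with ha
  have hla : (l : ℂ) * Complex.exp a = 1 := by
    rw [← Complex.ofReal_exp, ha, Real.exp_neg, Real.exp_log hl]
    rw [← Complex.ofReal_mul, mul_inv_cancel₀ hl.ne', Complex.ofReal_one]
  have ha0 : (a : ℂ) ≠ 0 := by
    have := Real.log_ne_zero_of_pos_of_ne_one hl hl1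
    simpa [ha] using this
  have hPa : Phi σ a = ((l ^ (-(σ * l / (l - 1))) : ℝ) : ℂ) := by
    rw [Phi_of_ne σ ha0, Real.rpow_def_of_pos hl, Complex.ofReal_exp]
    congr 1
    have hl' : (l : ℂ) ≠ 0 := by exact_mod_cast hl.ne'
    have hl1' : (l - 1 : ℂ) ≠ 0 := by
      rw [sub_ne_zero]; exact_mod_cast hl1
    have : Complex.exp a = (l : ℂ)⁻¹ := eq_inv_of_mul_eq_one_right hla
    have h2 : (1 - (l : ℂ)⁻¹) = (l - 1) / l := by field_simp
    rw [this, h2, ha]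
    push_cast
    field_simp
  set K : ℂ → ℂ := fun w => dslope (Phi σ) a w / (-l * dslope Complex.exp a w) with hKdef
  have hl' : (l : ℂ) ≠ 0 := by exact_mod_cast hl.ne'
  have hK : DifferentiableOn ℂ K strip := by
    refine (dslope_diff _ (Phi_diff σ) a).div
      ((dslope_diff _ Complex.differentiable_exp.differentiableOn a).const_mul _) ?_
    intro w hw
    exact mul_ne_zero (neg_ne_zero.2 hl') (dslope_exp_ne a hw)
  have hKe : ∀ w : ℂ, w ≠ a → K w = (Phi σ w - Phi σ a) / (1 - l * Complex.exp w) := by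
    intro w hw
    have hwa : w - a ≠ 0 := sub_ne_zero.2 hw
    simp only [hKdef]
    rw [dslope_of_ne _ hw, dslope_of_ne _ hw, slope_def_field, slope_def_field,
      ← mul_div_assoc, div_div_div_cancel_right₀ hwa]
    congr 1
    linear_combination hla
  have hP : Tendsto K FP (𝓝 0) := by
    have h1 := (Phi_FP σ).sub_const (Phi σ a)
    have hx := exp_FM.comp neg_FP
    have h2 := h1.mul (hx.div (hx.sub_const (l : ℂ)) (by simpa using hl'))
    simp only [zero_div, mul_zero] at h2
    refine h2.congr' ?_
    filter_upwards [ne_FP a] with w hw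
    rw [hKe w hw]
    simp only [Function.comp, Pi.div_apply, Complex.exp_neg]
    have := Complex.exp_ne_zero w
    rw [div_eq_mul_inv (Phi σ w - Phi σ a)]
    congr 1
    rw [div_eq_mul_inv, ← mul_inv]
    congr 1
    field_simp
  have hM : Tendsto K FM (𝓝 (-Phi σ a)) := by
    have h1 := (Phi_FM σ h0).sub_const (Phi σ a)
    have h2 := h1.div ((exp_FM.const_mul (l : ℂ)).const_sub 1) (by simp)
    simp only [mul_zero, sub_zero, div_one, zero_sub] at h2
    refine h2.congr' ?_
    filter_upwards [ne_FM a] with w hw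
    rw [hKe w hw]; rfl
  refine real_lim K hK 0 (-Phi σ a) hP hM _ (g_cont σ l hl.le)
    (g_nn σ l h0 h1 hl.le) _ (by simp [hPa]) fun t => ?_
  have hpi : (Real.pi : ℂ) ≠ 0 := by exact_mod_cast Real.pi_ne_zero
  have n1 : (t + Real.pi * I : ℂ) ≠ a := by
    intro h
    have := congrArg Complex.im h
    simp [Real.pi_ne_zero] at this
  have n2 : (t - Real.pi * I : ℂ) ≠ a := by
    intro h
    have := congrArg Complex.im h
    simp [Real.pi_ne_zero] at this
  have x1 : Complex.exp (t + Real.pi * I) = -Complex.exp t := by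
    rw [Complex.exp_add, Complex.exp_pi_mul_I]; ring
  have x2 : Complex.exp (t - Real.pi * I) = -Complex.exp t := by
    rw [Complex.exp_sub, Complex.exp_pi_mul_I]; ring
  rw [hKe _ n1, hKe _ n2, x1, x2, ← sub_div, sub_sub_sub_cancel_right, Phi_jump, g]
  push_cast
  rw [mul_neg, sub_neg_eq_add, div_eq_mul_inv]
  field_simp

lemma pull (σ l t : ℝ) : Real.exp t * ((1 / Real.pi) * Real.sin (Real.pi * σ / (1 + Real.exp t)) *
    (Real.exp t) ^ (σ / (1 + Real.exp t) - 1) * (1 + l * Real.exp t)⁻¹) = g σ l t := by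
  have e : Real.exp t * (Real.exp t) ^ (σ / (1 + Real.exp t) - 1) =
      Real.exp (σ * t / (1 + Real.exp t)) := by
    rw [← Real.exp_mul, ← Real.exp_add]
    congr 1
    ring
  rw [g, ← e]
  ring

end BSR

/-- Proposition 4.2(iv): for `0 < σ ≤ 1`, the function
`h_σ(x) = (1/π)·sin(πσ/(1+x))·x^{σ/(1+x)−1}` is a probability density on `(0,∞)`,
and for every `λ > 0` with `λ ≠ 1`,
`∫₀^∞ h_σ(x)/(1+λx) dx = λ^{−σλ/(λ−1)}`. -/
theorem density_of_beta_scaled_ratio_exponentials_mean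
    (σ : ℝ) (hσ0 : 0 < σ) (hσ1 : σ ≤ 1) :
    (∀ x ∈ Set.Ioi (0:ℝ),
      0 ≤ (1 / Real.pi) * Real.sin (Real.pi * σ / (1 + x)) * x ^ (σ / (1 + x) - 1)) ∧
    (∫ x in Set.Ioi (0:ℝ),
      (1 / Real.pi) * Real.sin (Real.pi * σ / (1 + x)) * x ^ (σ / (1 + x) - 1) = 1) ∧
    (∀ l : ℝ, 0 < l → l ≠ 1 →
      ∫ x in Set.Ioi (0:ℝ),
        (1 / Real.pi) * Real.sin (Real.pi * σ / (1 + x)) * x ^ (σ / (1 + x) - 1)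
          * (1 + l * x)⁻¹
        = l ^ (-(σ * l / (l - 1)))) := by
  refine ⟨fun x hx => ?_, ?_, fun l hl hl1 => ?_⟩
  · have hx' : 0 < x := hx
    have := BSR.sin_nn σ hσ0 hσ1 x hx'
    have := Real.pi_pos
    positivity
  · rw [BSR.subst]
    refine Eq.trans ?_ (BSR.mass_g σ hσ0 hσ1)
    congr 1
    ext t
    rw [← BSR.pull]
    simp
  · rw [BSR.subst, ← BSR.transform_g σ l hσ0 hσ1 hl hl1]
    congr 1
    ext t
    rw [← BSR.pull]
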